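/- Let N ≥ 1 and k ≥ 1 be integers, set n = N², and let q > 0 and r > 0 be real. Let L : ℝⁿ → M_N(ℂ) be an ℝ-linear map such that for every x ∈ ℝⁿ, L(x) is a Hermitian matrix and Tr(L(x)²) = ‖x‖². Then ∫_{ℝⁿ} Re Tr((L(x))^k)·(r/‖x‖)^k·exp(−q‖x‖²/2) dx = (q r²/2)^{k/2} · Γ(n/2)/Γ((k+n)/2) · ∫_{ℝⁿ} Re Tr((L(x))^k)·exp(−q‖x‖²/2) dx, where the integrand on the left is interpreted as 0 at x = 0. (This is the relation m_k(SUE) = (q r²/2)^{k/2}·Γ(n/2)/Γ((k+n)/2)·m_k(GUE) between the k-th spectral moments of the spherical unitary ensemble of radius r and the Gaussian unitary ensemble, expressed through an isometric ℝ-linear parametrization L of the N×N Hermitian matrices by ℝⁿ; note n = N² is the real dimension of the space of N×N Hermitian matrices.) -/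

import Mathlib

open MeasureTheory Real Matrix
open scoped Classical

/-!
In polar coordinates `x = y s`, the integral of `w ‖x‖ • f x` with `f` positively homogeneous
factors into a radial integral, which depends only on `w` and the degree of `f`, and the integral
of `f` over the unit sphere. Projecting `x` to the sphere of radius `r` replaces `f` of degree `a`
by a function of degree `0` whose values on the unit sphere are `r ^ a` times those of `f`. The
two spherical integrals thus differ by the factor `r ^ a` only, and the radial ones are Gamma
values. The `k`-th moment of a matrix depending linearly on `x` is the case `a = k`.
-/

section Polar

variable {E F : Type*} [NormedAddCommGroup E] [NormedSpace ℝ E] [FiniteDimensional ℝ E]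
  [Nontrivial E] [MeasurableSpace E] [BorelSpace E] [NormedAddCommGroup F] [NormedSpace ℝ F]

lemma integral_volumeIoiPow (m : ℕ) (h : ℝ → F) :
    ∫ y : Set.Ioi (0 : ℝ), h y ∂Measure.volumeIoiPow m = ∫ y in Set.Ioi (0 : ℝ), y ^ m • h y := by
  rw [Measure.volumeIoiPow,
    integral_withDensity_eq_integral_toReal_smul (by fun_prop) (by simp),
    ← integral_subtype_comap measurableSet_Ioi fun y : ℝ ↦ y ^ m • h y]
  refine integral_congr_ae (.of_forall fun y ↦ ?_)
  simp only [ENNReal.toReal_ofReal (pow_nonneg y.2.out.le m)]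

lemma integral_eq_integral_toSphere_prod_volumeIoiPow (μ : Measure E) [μ.IsAddHaarMeasure]
    (f : E → F) :
    ∫ x, f x ∂μ = ∫ z : Metric.sphere (0 : E) 1 × Set.Ioi (0 : ℝ), f (z.2.1 • z.1.1)
      ∂μ.toSphere.prod (.volumeIoiPow (Module.finrank ℝ E - 1)) := by
  rw [← μ.measurePreserving_homeomorphUnitSphereProd.integral_comp
      (Homeomorph.measurableEmbedding _), ← restrict_compl_singleton (μ := μ) 0,
    ← integral_subtype_comap (measurableSet_singleton _).compl f, restrict_compl_singleton]
  refine integral_congr_ae (.of_forall fun x ↦ ?_)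
  have hx : ‖(x : E)‖ ≠ 0 := norm_ne_zero_iff.mpr x.2
  simp [smul_smul, hx]

lemma integral_radial_smul_of_posHomogeneous (μ : Measure E) [μ.IsAddHaarMeasure] {a : ℝ}
    {f : E → F} (hf : ∀ c : ℝ, 0 < c → ∀ x, f (c • x) = c ^ a • f x) (w : ℝ → ℝ) :
    ∫ x, w ‖x‖ • f x ∂μ =
      (∫ y in Set.Ioi (0 : ℝ), y ^ (a + Module.finrank ℝ E - 1) * w y) •
        ∫ s, f s ∂μ.toSphere := by
  set d := Module.finrank ℝ E with hd
  have hd_pos : 1 ≤ d := Module.finrank_pos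
  have h_radial : ∫ y : Set.Ioi (0 : ℝ), y.1 ^ a * w y ∂Measure.volumeIoiPow (d - 1) =
      ∫ y in Set.Ioi (0 : ℝ), y ^ (a + d - 1) * w y := by
    rw [integral_volumeIoiPow (d - 1) fun y ↦ y ^ a * w y]
    refine setIntegral_congr_fun measurableSet_Ioi fun y (hy : 0 < y) ↦ ?_
    simp only [smul_eq_mul]
    rw [← mul_assoc, ← rpow_natCast, ← rpow_add hy, Nat.cast_sub hd_pos, Nat.cast_one]
    ring_nf
  rw [integral_eq_integral_toSphere_prod_volumeIoiPow μ, ← hd, ← h_radial, ← integral_prod_smul,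
    ← integral_prod_swap]
  refine integral_congr_ae (.of_forall fun z ↦ ?_)
  have h_norm : ‖z.1.1 • z.2.1‖ = z.1.1 := by
    simp [norm_smul, abs_of_pos z.1.2.out]
  simp only [Prod.fst_swap, Prod.snd_swap, h_norm, hf _ z.1.2.out, smul_smul, mul_comm]

lemma integral_exp_neg_mul_norm_rpow_smul_of_posHomogeneous (μ : Measure E)
    [μ.IsAddHaarMeasure] {a b p : ℝ} {f : E → F}
    (hf : ∀ c : ℝ, 0 < c → ∀ x, f (c • x) = c ^ a • f x)
    (ha : 0 < a + Module.finrank ℝ E) (hb : 0 < b) (hp : 0 < p) :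
    ∫ x, exp (-b * ‖x‖ ^ p) • f x ∂μ =
      (b ^ (-(a + Module.finrank ℝ E) / p) * (1 / p) * Gamma ((a + Module.finrank ℝ E) / p)) •
        ∫ s, f s ∂μ.toSphere := by
  rw [integral_radial_smul_of_posHomogeneous μ hf fun y ↦ exp (-b * y ^ p),
    integral_rpow_mul_exp_neg_mul_rpow hp (by linarith) hb, sub_add_cancel]

theorem integral_exp_neg_mul_norm_rpow_smul_comp_sphere_projection (μ : Measure E)
    [μ.IsAddHaarMeasure] {a b p r : ℝ} {f : E → F}
    (hf : ∀ c : ℝ, 0 < c → ∀ x, f (c • x) = c ^ a • f x)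
    (ha : 0 < a + Module.finrank ℝ E) (hb : 0 < b) (hp : 0 < p) (hr : 0 < r) :
    ∫ x, exp (-b * ‖x‖ ^ p) • f ((r / ‖x‖) • x) ∂μ =
      ((b * r ^ p) ^ (a / p) *
          (Gamma (Module.finrank ℝ E / p) / Gamma ((a + Module.finrank ℝ E) / p))) •
        ∫ x, exp (-b * ‖x‖ ^ p) • f x ∂μ := by
  set d := Module.finrank ℝ E with hd
  have hd_pos : (0 : ℝ) < d := by exact_mod_cast Module.finrank_pos
  have h_proj (c : ℝ) (hc : 0 < c) (x : E) :
      f ((r / ‖c • x‖) • c • x) = c ^ (0 : ℝ) • f ((r / ‖x‖) • x) := by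
    rw [rpow_zero, one_smul, smul_smul, norm_smul, norm_of_nonneg hc.le, div_mul_eq_mul_div,
      mul_comm c, mul_div_mul_right _ _ hc.ne']
  have h_sphere : ∫ s : Metric.sphere (0 : E) 1, f ((r / ‖s.1‖) • s.1) ∂μ.toSphere =
      r ^ a • ∫ s : Metric.sphere (0 : E) 1, f s ∂μ.toSphere := by
    simp only [norm_eq_of_mem_sphere, div_one, hf r hr, integral_smul]
  have h_scale : (b * r ^ p) ^ (a / p) = b ^ (a / p) * r ^ a := by
    rw [mul_rpow hb.le (by positivity), ← rpow_mul hr.le, mul_div_cancel₀ a hp.ne']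
  have h_exponent : b ^ (-d / p) = b ^ (a / p) * b ^ (-(a + d) / p) := by
    rw [← rpow_add hb]
    ring_nf
  have h_gamma : Gamma ((a + d) / p) ≠ 0 := (Gamma_pos_of_pos (by positivity)).ne'
  rw [integral_exp_neg_mul_norm_rpow_smul_of_posHomogeneous μ h_proj (by simpa using hd_pos) hb hp,
    integral_exp_neg_mul_norm_rpow_smul_of_posHomogeneous μ hf ha hb hp, h_sphere, smul_smul,
    smul_smul, ← hd, zero_add, h_scale, h_exponent]
  congr 1
  field_simp

end Polar

lemma re_trace_map_smul_pow {E ι : Type*} [AddCommGroup E] [Module ℝ E] [Fintype ι] [DecidableEq ι]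
    (L : E →ₗ[ℝ] Matrix ι ι ℂ) (k : ℕ) (c : ℝ) (x : E) :
    (trace (L (c • x) ^ k)).re = c ^ k * (trace (L x ^ k)).re := by
  rw [map_smul, smul_pow, trace_smul, Complex.smul_re, smul_eq_mul]

theorem stmt_5_general {E ι : Type*} [NormedAddCommGroup E] [NormedSpace ℝ E]
    [FiniteDimensional ℝ E] [Nontrivial E] [MeasurableSpace E] [BorelSpace E] [Fintype ι]
    [DecidableEq ι] (μ : Measure E) [μ.IsAddHaarMeasure] (k : ℕ) {q r : ℝ} (hq : 0 < q)
    (hr : 0 < r) (L : E →ₗ[ℝ] Matrix ι ι ℂ) :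
    ∫ x, (if x = 0 then 0 else (trace (L x ^ k)).re * (r / ‖x‖) ^ k) *
        exp (-q * ‖x‖ ^ 2 / 2) ∂μ =
      (q * r ^ 2 / 2) ^ ((k : ℝ) / 2) *
          (Gamma (Module.finrank ℝ E / 2) / Gamma ((k + Module.finrank ℝ E) / 2)) *
        ∫ x, (trace (L x ^ k)).re * exp (-q * ‖x‖ ^ 2 / 2) ∂μ := by
  have h_hom (c : ℝ) (_ : 0 < c) (x : E) :
      (trace (L (c • x) ^ k)).re = c ^ (k : ℝ) • (trace (L x ^ k)).re := by
    rw [re_trace_map_smul_pow, rpow_natCast, smul_eq_mul]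
  have h_dim : (0 : ℝ) < k + Module.finrank ℝ E := by
    have : 0 < Module.finrank ℝ E := Module.finrank_pos
    positivity
  have h_weight (t : ℝ) : exp (-q * t ^ 2 / 2) = exp (-(q / 2) * t ^ (2 : ℝ)) := by
    rw [rpow_two]
    ring_nf
  have h_scale : q * r ^ 2 / 2 = q / 2 * r ^ (2 : ℝ) := by
    rw [rpow_two]
    ring
  calc
    _ = ∫ x, exp (-(q / 2) * ‖x‖ ^ (2 : ℝ)) • (trace (L ((r / ‖x‖) • x) ^ k)).re ∂μ := by
      refine integral_congr_ae ?_
      filter_upwards [Measure.ae_ne μ 0] with x hx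
      rw [if_neg hx, re_trace_map_smul_pow, h_weight, smul_eq_mul]
      ring
    _ = _ := integral_exp_neg_mul_norm_rpow_smul_comp_sphere_projection μ
      (f := fun x ↦ (trace (L x ^ k)).re) h_hom h_dim (half_pos hq) two_pos hr
    _ = _ := by simp only [h_weight, h_scale, smul_eq_mul, mul_comm (exp _)]

/-- The relation `m_k(SUE) = (qr²/2)^{k/2} Γ(n/2)/Γ((k+n)/2) m_k(GUE)`
expressed through an isometric ℝ-linear parametrization `L` of the `N × N` Hermitian
matrices by `ℝⁿ`, `n = N²`. -/
theorem stmt_5 (N k n : ℕ) (hN : 1 ≤ N) (hk : 1 ≤ k) (hn : n = N ^ 2)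
    (q r : ℝ) (hq : 0 < q) (hr : 0 < r)
    (L : EuclideanSpace ℝ (Fin n) →ₗ[ℝ] Matrix (Fin N) (Fin N) ℂ)
    (hherm : ∀ x, (L x).IsHermitian)
    (hiso : ∀ x : EuclideanSpace ℝ (Fin n), Matrix.trace ((L x) ^ 2) = ((‖x‖ ^ 2 : ℝ) : ℂ)) :
    (∫ x : EuclideanSpace ℝ (Fin n),
        (if x = 0 then (0 : ℝ) else (Matrix.trace ((L x) ^ k)).re * (r / ‖x‖) ^ k)
          * Real.exp (-q * ‖x‖ ^ 2 / 2))
      = (q * r ^ 2 / 2) ^ ((k : ℝ) / 2) * (Real.Gamma (n / 2) / Real.Gamma ((k + n) / 2)) *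
        ∫ x : EuclideanSpace ℝ (Fin n),
          (Matrix.trace ((L x) ^ k)).re * Real.exp (-q * ‖x‖ ^ 2 / 2) := by
  have : NeZero n := ⟨by rw [hn]; positivity⟩
  simpa using stmt_5_general volume k hq hr L
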